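/- arXiv:1109.2248 — 2 statements merged into one kernel-verified Lean document; each statement's English description precedes it below -/
import Mathlib

section
/- Let 1<p<∞ and let {Q_m} be a locally finite family of cubes in ℝ^n together with subcubes R_m ⊂ Q_m satisfying |Q_m| ≤ σ^n |R_m| for a fixed σ ≥ 1. Then for all nonnegative scalars a_m: ‖∑_m a_m χ_{Q_m}‖_{L^p(ℝ^n)} ≤ c(n,p,σ) ‖∑_m a_m χ_{R_m}‖_{L^p(ℝ^n)}. -/
open Metric MeasureTheory
open scoped ENNReal

/-!
By duality it suffices to bound `∑ a_m ∫_{Q_m} g` by a multiple of `‖g‖_{p'}`. The average of `g`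
over `Q_m` is at most the maximal function `Mg` at every point of `R_m`, so
`∫_{Q_m} g ≤ σ^n ∫_{R_m} Mg`, and Hölder's inequality bounds the sum by
`σ^n ‖∑ a_m χ_{R_m}‖_p ‖Mg‖_{p'}`. The maximal inequality `‖Mg‖_{p'} ≲ ‖g‖_{p'}` follows from
Vitali's covering lemma in the form `t |{Mg > t}| ≲ ∫_{2g > t} 2g`, integrated against
`t^{p' - 2} dt`. It is enough to let `M` see only the cubes `Q_m`.
-/

section Lp

variable {α : Type*} [MeasurableSpace α] {μ : Measure α} {p q : ℝ}

lemma rpow_one_div_le_of_le_mul_rpow_one_div (hpq : p.HolderConjugate q) {a C : ℝ≥0∞}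
    (ha : a ≠ ∞) (h : a ≤ C * a ^ (1 / q)) : a ^ (1 / p) ≤ C := by
  rcases eq_or_ne a 0 with rfl | ha0
  · simp [ENNReal.zero_rpow_of_pos hpq.inv_pos]
  · have hsplit : a ^ (1 / p) * a ^ (1 / q) = a := by
      rw [← ENNReal.rpow_add _ _ ha0 ha, hpq.one_div_add_one_div, div_one, ENNReal.rpow_one]
    refine (ENNReal.mul_le_mul_iff_left ?_ ?_).1 (hsplit.trans_le h)
    · simp [ENNReal.rpow_eq_zero_iff, ha0, ha]
    · exact ENNReal.rpow_ne_top_of_nonneg hpq.symm.one_div_nonneg ha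

lemma exists_simpleFunc_le_lintegral_lt_top_lt_lintegral [SigmaFinite μ] {f : α → ℝ≥0∞}
    {c : ℝ≥0∞} (hc : c < ∫⁻ z, f z ∂μ) :
    ∃ φ : SimpleFunc α NNReal, (∀ z, (φ z : ℝ≥0∞) ≤ f z) ∧ ∫⁻ z, φ z ∂μ < ∞ ∧ c < ∫⁻ z, φ z ∂μ := by
  simp only [lintegral_eq_nnreal, lt_iSup_iff, exists_prop] at hc
  obtain ⟨ψ, hψf, hcψ⟩ := hc
  rw [← SimpleFunc.lintegral_eq_lintegral] at hcψ
  obtain ⟨φ, hφψ, hφ_top, hcφ⟩ := SimpleFunc.exists_lt_lintegral_simpleFunc_of_lt_lintegral hcψ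
  exact ⟨φ, fun z => (ENNReal.coe_le_coe.2 (hφψ z)).trans (hψf z), hφ_top, hcφ⟩

lemma rpow_lintegral_rpow_le_of_forall_lintegral_mul_le [SigmaFinite μ]
    (hpq : p.HolderConjugate q) {f : α → ℝ≥0∞} {C : ℝ≥0∞}
    (h : ∀ g, Measurable g → ∫⁻ z, f z * g z ∂μ ≤ C * (∫⁻ z, g z ^ q ∂μ) ^ (1 / q)) :
    (∫⁻ z, f z ^ p ∂μ) ^ (1 / p) ≤ C := by
  rw [one_div, ENNReal.rpow_inv_le_iff hpq.pos]
  refine le_of_forall_lt fun c hc => ?_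
  obtain ⟨φ, hφf, hφ_top, hcφ⟩ := exists_simpleFunc_le_lintegral_lt_top_lt_lintegral hc
  refine hcφ.trans_le ?_
  rw [← ENNReal.rpow_inv_le_iff hpq.pos, ← one_div]
  refine rpow_one_div_le_of_le_mul_rpow_one_div hpq hφ_top.ne ?_
  calc ∫⁻ z, φ z ∂μ = ∫⁻ z, φ z ^ (1 / p) * φ z ^ (1 / q) ∂μ := by
        refine lintegral_congr fun z => ?_
        rw [← ENNReal.rpow_add_of_nonneg _ _ hpq.one_div_nonneg hpq.symm.one_div_nonneg,
          hpq.one_div_add_one_div, div_one, ENNReal.rpow_one]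
    _ ≤ ∫⁻ z, f z * φ z ^ (1 / q) ∂μ := by
        gcongr with z
        rw [one_div, ENNReal.rpow_inv_le_iff hpq.pos]
        exact hφf z
    _ ≤ C * (∫⁻ z, (φ z ^ (1 / q)) ^ q ∂μ) ^ (1 / q) := 
        h _ (φ.measurable.coe_nnreal_ennreal.pow_const _)
    _ = C * (∫⁻ z, φ z ∂μ) ^ (1 / q) := by
        simp only [← ENNReal.rpow_mul, one_div_mul_cancel hpq.symm.ne_zero, ENNReal.rpow_one]

lemma lintegral_Ioi_ofReal_rpow_eq_top (s : ℝ) :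
    ∫⁻ t in Set.Ioi (0 : ℝ), ENNReal.ofReal (t ^ s) = ∞ := by
  by_contra h
  refine not_integrableOn_Ioi_rpow s ((lintegral_ofReal_ne_top_iff_integrable ?_ ?_).1 h)
  · exact (measurable_id.pow_const s).aestronglyMeasurable
  · filter_upwards [ae_restrict_mem measurableSet_Ioi] with t ht
    exact Real.rpow_nonneg (le_of_lt ht) s

lemma lintegral_rpow_eq_lintegral_measure_ofReal_lt_mul {f : α → ℝ≥0∞} (hf : AEMeasurable f μ)
    (hq : 0 < q) :
    ∫⁻ z, f z ^ q ∂μ = ENNReal.ofReal q *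
      ∫⁻ t in Set.Ioi (0 : ℝ), μ {z | ENNReal.ofReal t < f z} * ENNReal.ofReal (t ^ (q - 1)) := by
  by_cases hfin : ∀ᵐ z ∂μ, f z ≠ ∞
  · have hmeas : ∀ t ∈ Set.Ioi (0 : ℝ),
        μ {z | t < (f z).toReal} = μ {z | ENNReal.ofReal t < f z} := fun t ht => by
      refine measure_congr ?_
      filter_upwards [hfin] with z hz
      exact propext (ENNReal.ofReal_lt_iff_lt_toReal (le_of_lt ht) hz).symm
    calc ∫⁻ z, f z ^ q ∂μ = ∫⁻ z, ENNReal.ofReal ((f z).toReal ^ q) ∂μ := by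
          refine lintegral_congr_ae ?_
          filter_upwards [hfin] with z hz
          rw [← ENNReal.ofReal_rpow_of_nonneg ENNReal.toReal_nonneg hq.le, ENNReal.ofReal_toReal hz]
      _ = _ := lintegral_rpow_eq_lintegral_meas_lt_mul μ (.of_forall fun _ => ENNReal.toReal_nonneg)
          hf.ennreal_toReal hq
      _ = _ := by
          congr 1
          exact setLIntegral_congr_fun measurableSet_Ioi fun t ht => by simp only [hmeas t ht]
  · have hleft : ∫⁻ z, f z ^ q ∂μ = ∞ := by
      by_contra h
      refine hfin ?_
      filter_upwards [ae_lt_top' (hf.pow_const q) h] with z hz hz_top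
      simp [hz_top, ENNReal.top_rpow_of_pos hq] at hz
    have hright : ∫⁻ t in Set.Ioi (0 : ℝ),
        μ {z | ENNReal.ofReal t < f z} * ENNReal.ofReal (t ^ (q - 1)) = ∞ := by
      refine top_le_iff.1 ?_
      calc ∞ = μ {z | f z = ∞} * ∫⁻ t in Set.Ioi (0 : ℝ), ENNReal.ofReal (t ^ (q - 1)) := by
            rw [lintegral_Ioi_ofReal_rpow_eq_top, ENNReal.mul_top]
            simpa [ae_iff] using hfin
        _ ≤ ∫⁻ t in Set.Ioi (0 : ℝ), μ {z | f z = ∞} * ENNReal.ofReal (t ^ (q - 1)) :=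
            lintegral_const_mul_le _ _
        _ ≤ _ := by
            gcongr with t z
            rintro hz
            simp [hz]
    rw [hleft, hright, ENNReal.mul_top (by simpa using hq)]

lemma lintegral_rpow_le_of_mul_measure_lt_le {ν : Measure α} {f g : α → ℝ≥0∞}
    (hf : AEMeasurable f μ) (hg : AEMeasurable g ν) (hq : 1 < q)
    (h : ∀ t : ℝ, 0 < t →
      ENNReal.ofReal t * μ {z | ENNReal.ofReal t < f z} ≤ ν {z | ENNReal.ofReal t < g z}) :
    ∫⁻ z, f z ^ q ∂μ ≤ ENNReal.ofReal (q / (q - 1)) * ∫⁻ z, g z ^ (q - 1) ∂ν := by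
  have hq1 : 0 < q - 1 := sub_pos.2 hq
  have hq0 : 0 < q := one_pos.trans hq
  calc ∫⁻ z, f z ^ q ∂μ
      = ENNReal.ofReal q * ∫⁻ t in Set.Ioi (0 : ℝ),
          μ {z | ENNReal.ofReal t < f z} * ENNReal.ofReal (t ^ (q - 1)) :=
        lintegral_rpow_eq_lintegral_measure_ofReal_lt_mul hf hq0
    _ ≤ ENNReal.ofReal q * ∫⁻ t in Set.Ioi (0 : ℝ),
          ν {z | ENNReal.ofReal t < g z} * ENNReal.ofReal (t ^ (q - 1 - 1)) := by
        gcongr ENNReal.ofReal q * ?_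
        refine setLIntegral_mono' measurableSet_Ioi fun t (ht : 0 < t) => ?_
        have ht_pow : t ^ (q - 1) = t * t ^ (q - 1 - 1) := by
          rw [Real.rpow_sub_one ht.ne' (q - 1), mul_div_cancel₀ _ ht.ne']
        rw [ht_pow, ENNReal.ofReal_mul ht.le, ← mul_assoc, mul_comm (μ _)]
        gcongr
        exact h t ht
    _ = ENNReal.ofReal (q / (q - 1)) * ∫⁻ z, g z ^ (q - 1) ∂ν := by
        rw [lintegral_rpow_eq_lintegral_measure_ofReal_lt_mul hg hq1, ← mul_assoc,
          ← ENNReal.ofReal_mul (by positivity), div_mul_cancel₀ _ hq1.ne']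

end Lp

section MaximalFunction

variable {α ι : Type*} [MeasurableSpace α] {μ : Measure α}

lemma mul_measure_le_setLIntegral_of_lt_setLAverage {s : Set α} (hs : MeasurableSet s)
    {g : α → ℝ≥0∞} (hg : Measurable g) {t : ℝ≥0∞} (ht : t < ⨍⁻ z in s, g z ∂μ) :
    t * μ s ≤ ∫⁻ z in s ∩ {z | t < 2 * g z}, 2 * g z ∂μ := by
  have hs_top : μ s ≠ ∞ := fun h => by simp [setLAverage_eq, h] at ht
  have hle : t * μ s ≤ ∫⁻ z in s, g z ∂μ := by
    rw [← measure_mul_setLAverage g hs_top, mul_comm]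
    gcongr
  have hlevel : MeasurableSet {z | t < 2 * g z} :=
    measurableSet_lt measurable_const (hg.const_mul 2)
  refine ENNReal.le_of_add_le_add_right (ENNReal.mul_ne_top ht.ne_top hs_top) ?_
  -- The points of `s` with `2 * g ≤ t` contribute at most `t * μ s`, half of the total.
  calc t * μ s + t * μ s ≤ ∫⁻ z in s, 2 * g z ∂μ := by
        rw [lintegral_const_mul _ hg, two_mul]
        gcongr
    _ = ∫⁻ z in s ∩ {z | t < 2 * g z}, 2 * g z ∂μ + ∫⁻ z in s \ {z | t < 2 * g z}, 2 * g z ∂μ :=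
        (lintegral_inter_add_sdiff _ s hlevel).symm
    _ ≤ ∫⁻ z in s ∩ {z | t < 2 * g z}, 2 * g z ∂μ + ∫⁻ _ in s \ {z | t < 2 * g z}, t ∂μ := by
        gcongr _ + ?_
        exact setLIntegral_mono' (hs.diff hlevel) fun z hz => not_lt.1 hz.2
    _ ≤ ∫⁻ z in s ∩ {z | t < 2 * g z}, 2 * g z ∂μ + t * μ s := by
        rw [setLIntegral_const]
        gcongr
        exact Set.sdiff_subset

/-- The uncentred Hardy–Littlewood maximal function of `g` relative to the family of sets `Q`:
at `z` it is the supremum of the averages of `g` over those `Q i` that contain `z`, and `0` if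
there are none. With the family fixed and countable, measurability is immediate. -/
noncomputable def maximalFunction (μ : Measure α) (Q : ι → Set α) (g : α → ℝ≥0∞) (z : α) : ℝ≥0∞ :=
  ⨆ i, (Q i).indicator (fun _ => ⨍⁻ w in Q i, g w ∂μ) z

lemma setLAverage_le_maximalFunction {Q : ι → Set α} {g : α → ℝ≥0∞} {i : ι} {z : α}
    (hz : z ∈ Q i) : ⨍⁻ w in Q i, g w ∂μ ≤ maximalFunction μ Q g z :=
  le_iSup_of_le i (Set.indicator_of_mem hz fun _ => ⨍⁻ w in Q i, g w ∂μ).ge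

lemma measurable_maximalFunction [Countable ι] {Q : ι → Set α} (hQ : ∀ i, MeasurableSet (Q i))
    (g : α → ℝ≥0∞) : Measurable (maximalFunction μ Q g) :=
  .iSup fun i => measurable_const.indicator (hQ i)

lemma setOf_lt_maximalFunction (Q : ι → Set α) (g : α → ℝ≥0∞) (t : ℝ≥0∞) :
    {z | t < maximalFunction μ Q g z} = ⋃ i : {i // t < ⨍⁻ w in Q i, g w ∂μ}, Q i := by
  ext z
  simp only [maximalFunction, Set.mem_ofPred_eq, lt_iSup_iff, Set.mem_iUnion, Subtype.exists,
    exists_prop]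
  refine exists_congr fun i => ?_
  by_cases hz : z ∈ Q i <;> simp [hz]

section Doubling

variable [PseudoMetricSpace α] [OpensMeasurableSpace α] {ν : Measure α} {x : ι → α} {r : ι → ℝ}
  {τ : ℝ}

lemma measure_biUnion_finset_closedBall_le_of_measure_closedBall_mul_le (hτ : 3 < τ) (S : Finset ι)
    (h : ∀ i ∈ S, μ (closedBall (x i) (τ * r i)) ≤ ν (closedBall (x i) (r i))) :
    μ (⋃ i ∈ S, closedBall (x i) (r i)) ≤ ν (⋃ i ∈ S, closedBall (x i) (r i)) := by
  classical
  obtain ⟨ρ, hρ⟩ := (S.image r).exists_le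
  obtain ⟨u, huS, hu_disj, hu_cover⟩ :=
    Vitali.exists_disjoint_subfamily_covering_enlargement_closedBall (S : Set ι) x r ρ
      (fun i hi => hρ _ (Finset.mem_image_of_mem r hi)) τ hτ
  lift u to Finset ι using S.finite_toSet.subset huS
  calc μ (⋃ i ∈ S, closedBall (x i) (r i))
      ≤ μ (⋃ j ∈ u, closedBall (x j) (τ * r j)) := by
        refine measure_mono (Set.iUnion₂_subset fun i hi => ?_)
        obtain ⟨j, hj, hij⟩ := hu_cover i hi
        exact hij.trans (Set.subset_biUnion_of_mem (u := fun j => closedBall (x j) (τ * r j)) hj)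
    _ ≤ ∑ j ∈ u, μ (closedBall (x j) (τ * r j)) := measure_biUnion_finset_le _ _
    _ ≤ ∑ j ∈ u, ν (closedBall (x j) (r j)) := Finset.sum_le_sum fun j hj => h j (huS hj)
    _ = ν (⋃ j ∈ u, closedBall (x j) (r j)) :=
        (measure_biUnion_finset hu_disj fun _ _ => measurableSet_closedBall).symm
    _ ≤ ν (⋃ i ∈ S, closedBall (x i) (r i)) := measure_mono (Set.biUnion_subset_biUnion_left huS)

variable [Countable ι]

lemma measure_iUnion_closedBall_le_of_measure_closedBall_mul_le (hτ : 3 < τ)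
    (h : ∀ i, μ (closedBall (x i) (τ * r i)) ≤ ν (closedBall (x i) (r i))) :
    μ (⋃ i, closedBall (x i) (r i)) ≤ ν (⋃ i, closedBall (x i) (r i)) := by
  have hmono : Monotone fun S : Finset ι => ⋃ i ∈ S, closedBall (x i) (r i) :=
    fun _ _ hST => Set.biUnion_subset_biUnion_left hST
  rw [Set.iUnion_eq_iUnion_finset, hmono.measure_iUnion, hmono.measure_iUnion]
  exact iSup_mono fun S =>
    measure_biUnion_finset_closedBall_le_of_measure_closedBall_mul_le hτ S fun i _ => h i

variable {D : ℝ≥0∞} {g : α → ℝ≥0∞}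

lemma mul_measure_lt_maximalFunction_le (hτ : 3 < τ)
    (hD : ∀ i, μ (closedBall (x i) (τ * r i)) ≤ D * μ (closedBall (x i) (r i)))
    (hg : Measurable g) (t : ℝ≥0∞) :
    t * μ {z | t < maximalFunction μ (fun i => closedBall (x i) (r i)) g z} ≤
      D * ∫⁻ z in {z | t < 2 * g z}, 2 * g z ∂μ := by
  set E := {z | t < 2 * g z}
  set ν := D • (μ.restrict E).withDensity fun z => 2 * g z
  have hball (i : {i // t < ⨍⁻ w in closedBall (x i) (r i), g w ∂μ}) :
      (t • μ) (closedBall (x i) (τ * r i)) ≤ ν (closedBall (x i) (r i)) := by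
    calc t * μ (closedBall (x i) (τ * r i)) ≤ D * (t * μ (closedBall (x i) (r i))) := by
          rw [mul_left_comm]
          gcongr
          exact hD i
      _ ≤ D * ∫⁻ z in closedBall (x i) (r i) ∩ E, 2 * g z ∂μ := by
          gcongr
          exact mul_measure_le_setLIntegral_of_lt_setLAverage measurableSet_closedBall hg i.2
      _ = ν (closedBall (x i) (r i)) := by
          rw [Measure.smul_apply, withDensity_apply _ measurableSet_closedBall,
            Measure.restrict_restrict measurableSet_closedBall, smul_eq_mul]
  calc t * μ {z | t < maximalFunction μ (fun i => closedBall (x i) (r i)) g z}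
      ≤ ν {z | t < maximalFunction μ (fun i => closedBall (x i) (r i)) g z} := by
        rw [setOf_lt_maximalFunction]
        exact measure_iUnion_closedBall_le_of_measure_closedBall_mul_le hτ hball
    _ ≤ ν Set.univ := measure_mono (Set.subset_univ _)
    _ = D * ∫⁻ z in E, 2 * g z ∂μ := by
        rw [Measure.smul_apply, withDensity_apply _ .univ, Measure.restrict_univ, smul_eq_mul]

lemma lintegral_maximalFunction_rpow_le {q : ℝ} (hq : 1 < q) (hτ : 3 < τ)
    (hD : ∀ i, μ (closedBall (x i) (τ * r i)) ≤ D * μ (closedBall (x i) (r i)))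
    (hg : Measurable g) :
    ∫⁻ z, maximalFunction μ (fun i => closedBall (x i) (r i)) g z ^ q ∂μ ≤
      ENNReal.ofReal (q / (q - 1)) * D * ∫⁻ z, (2 * g z) ^ q ∂μ := by
  have h2g : Measurable fun z => 2 * g z := hg.const_mul 2
  calc ∫⁻ z, maximalFunction μ (fun i => closedBall (x i) (r i)) g z ^ q ∂μ
      ≤ ENNReal.ofReal (q / (q - 1)) *
          ∫⁻ z, (2 * g z) ^ (q - 1) ∂(D • μ.withDensity fun z => 2 * g z) := by
        refine lintegral_rpow_le_of_mul_measure_lt_le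
          (measurable_maximalFunction (fun _ => measurableSet_closedBall) g).aemeasurable
          h2g.aemeasurable hq fun t _ => ?_
        rw [Measure.smul_apply, withDensity_apply _ (measurableSet_lt measurable_const h2g)]
        exact mul_measure_lt_maximalFunction_le hτ hD hg _
    _ = ENNReal.ofReal (q / (q - 1)) * D * ∫⁻ z, 2 * g z * (2 * g z) ^ (q - 1) ∂μ := by
        rw [lintegral_smul_measure, lintegral_withDensity_eq_lintegral_mul _ h2g
          (h2g.pow_const _), smul_eq_mul, mul_assoc]
        rfl
    _ = ENNReal.ofReal (q / (q - 1)) * D * ∫⁻ z, (2 * g z) ^ q ∂μ := by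
        congr! 3 with z
        simpa using (ENNReal.rpow_add_of_nonneg (x := 2 * g z) 1 (q - 1) zero_le_one
          (sub_pos.2 hq).le).symm

lemma rpow_lintegral_maximalFunction_rpow_le {q : ℝ} (hq : 1 < q) (hτ : 3 < τ)
    (hD : ∀ i, μ (closedBall (x i) (τ * r i)) ≤ D * μ (closedBall (x i) (r i)))
    (hg : Measurable g) :
    (∫⁻ z, maximalFunction μ (fun i => closedBall (x i) (r i)) g z ^ q ∂μ) ^ (1 / q) ≤
      2 * (ENNReal.ofReal (q / (q - 1)) * D) ^ (1 / q) * (∫⁻ z, g z ^ q ∂μ) ^ (1 / q) := by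
  have hq0 : 0 < q := one_pos.trans hq
  have hq_inv : 0 ≤ 1 / q := one_div_nonneg.2 hq0.le
  set c := ENNReal.ofReal (q / (q - 1)) * D
  calc (∫⁻ z, maximalFunction μ (fun i => closedBall (x i) (r i)) g z ^ q ∂μ) ^ (1 / q)
      ≤ (c * ∫⁻ z, (2 * g z) ^ q ∂μ) ^ (1 / q) :=
        ENNReal.rpow_le_rpow (lintegral_maximalFunction_rpow_le hq hτ hD hg) hq_inv
    _ = (c * (2 ^ q * ∫⁻ z, g z ^ q ∂μ)) ^ (1 / q) := by
        simp only [ENNReal.mul_rpow_of_nonneg _ _ hq0.le, lintegral_const_mul _ (hg.pow_const q)]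
    _ = 2 * c ^ (1 / q) * (∫⁻ z, g z ^ q ∂μ) ^ (1 / q) := by
        rw [ENNReal.mul_rpow_of_nonneg c _ hq_inv, ENNReal.mul_rpow_of_nonneg (2 ^ q) _ hq_inv,
          ← ENNReal.rpow_mul, mul_one_div_cancel hq0.ne', ENNReal.rpow_one]
        ring

end Doubling

section Comparison

variable {Q R : ι → Set α} {K : ℝ≥0∞}

lemma setLIntegral_le_mul_setLIntegral_maximalFunction {i : ι} (hR : MeasurableSet (R i))
    (hRQ : R i ⊆ Q i) (hQ_top : μ (Q i) ≠ ∞) (hK : μ (Q i) ≤ K * μ (R i)) (g : α → ℝ≥0∞) :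
    ∫⁻ z in Q i, g z ∂μ ≤ K * ∫⁻ z in R i, maximalFunction μ Q g z ∂μ := by
  calc ∫⁻ z in Q i, g z ∂μ = μ (Q i) * ⨍⁻ z in Q i, g z ∂μ :=
        (measure_mul_setLAverage g hQ_top).symm
    _ ≤ K * μ (R i) * ⨍⁻ z in Q i, g z ∂μ := by gcongr
    _ = K * ∫⁻ _ in R i, ⨍⁻ w in Q i, g w ∂μ ∂μ := by
        rw [setLIntegral_const, mul_assoc, mul_comm (μ (R i))]
    _ ≤ K * ∫⁻ z in R i, maximalFunction μ Q g z ∂μ := by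
        gcongr K * ?_
        exact setLIntegral_mono' hR fun z hz => setLAverage_le_maximalFunction (hRQ hz)

variable [Countable ι]

lemma lintegral_tsum_indicator_mul (hQ : ∀ i, MeasurableSet (Q i)) (a : ι → ℝ≥0∞)
    {g : α → ℝ≥0∞} (hg : Measurable g) :
    ∫⁻ z, (∑' i, a i * (Q i).indicator (1 : α → ℝ≥0∞) z) * g z ∂μ =
      ∑' i, a i * ∫⁻ z in Q i, g z ∂μ := by
  have hindicator (i : ι) (z : α) :
      a i * (Q i).indicator (1 : α → ℝ≥0∞) z * g z = a i * (Q i).indicator g z := by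
    by_cases hz : z ∈ Q i <;> simp [hz]
  simp only [← ENNReal.tsum_mul_right, hindicator]
  rw [lintegral_tsum fun i => ((hg.indicator (hQ i)).const_mul _).aemeasurable]
  simp only [lintegral_const_mul _ (hg.indicator (hQ _)), lintegral_indicator (hQ _)]

lemma rpow_lintegral_tsum_indicator_le_of_maximalFunction_le [SigmaFinite μ] {p q : ℝ}
    (hpq : p.HolderConjugate q) {C : ℝ≥0∞} (hQ : ∀ i, MeasurableSet (Q i))
    (hR : ∀ i, MeasurableSet (R i)) (hRQ : ∀ i, R i ⊆ Q i) (hQ_top : ∀ i, μ (Q i) ≠ ∞)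
    (hK : ∀ i, μ (Q i) ≤ K * μ (R i))
    (hC : ∀ g, Measurable g →
      (∫⁻ z, maximalFunction μ Q g z ^ q ∂μ) ^ (1 / q) ≤ C * (∫⁻ z, g z ^ q ∂μ) ^ (1 / q))
    (a : ι → ℝ≥0∞) :
    (∫⁻ z, (∑' i, a i * (Q i).indicator (1 : α → ℝ≥0∞) z) ^ p ∂μ) ^ (1 / p) ≤
      K * C * (∫⁻ z, (∑' i, a i * (R i).indicator (1 : α → ℝ≥0∞) z) ^ p ∂μ) ^ (1 / p) := by
  set G : α → ℝ≥0∞ := fun z => ∑' i, a i * (R i).indicator (1 : α → ℝ≥0∞) z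
  have hG : Measurable G := .tsum fun i => (measurable_one.indicator (hR i)).const_mul _
  refine rpow_lintegral_rpow_le_of_forall_lintegral_mul_le hpq fun g hg => ?_
  have hMg : Measurable (maximalFunction μ Q g) := measurable_maximalFunction hQ g
  calc ∫⁻ z, (∑' i, a i * (Q i).indicator (1 : α → ℝ≥0∞) z) * g z ∂μ
      = ∑' i, a i * ∫⁻ z in Q i, g z ∂μ := lintegral_tsum_indicator_mul hQ a hg
    _ ≤ ∑' i, a i * (K * ∫⁻ z in R i, maximalFunction μ Q g z ∂μ) := by
        gcongr with i
        exact setLIntegral_le_mul_setLIntegral_maximalFunction (hR i) (hRQ i) (hQ_top i) (hK i) g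
    _ = K * ∫⁻ z, G z * maximalFunction μ Q g z ∂μ := by
        simp only [G, lintegral_tsum_indicator_mul hR a hMg, mul_left_comm _ K,
          ENNReal.tsum_mul_left]
    _ ≤ K * ((∫⁻ z, G z ^ p ∂μ) ^ (1 / p) *
          (∫⁻ z, maximalFunction μ Q g z ^ q ∂μ) ^ (1 / q)) := by
        gcongr
        exact ENNReal.lintegral_mul_le_Lp_mul_Lq μ hpq hG.aemeasurable hMg.aemeasurable
    _ ≤ K * ((∫⁻ z, G z ^ p ∂μ) ^ (1 / p) * (C * (∫⁻ z, g z ^ q ∂μ) ^ (1 / q))) := by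
        gcongr
        exact hC g hg
    _ = K * C * (∫⁻ z, G z ^ p ∂μ) ^ (1 / p) * (∫⁻ z, g z ^ q ∂μ) ^ (1 / q) := by ring

end Comparison

end MaximalFunction

lemma addHaar_closedBall_mul_eq_mul_addHaar_closedBall {E : Type*} [NormedAddCommGroup E]
    [NormedSpace ℝ E] [MeasurableSpace E] [BorelSpace E] [FiniteDimensional ℝ E] (μ : Measure E)
    [μ.IsAddHaarMeasure] (x : E) {τ : ℝ} (hτ : 0 < τ) (r : ℝ) :
    μ (closedBall x (τ * r)) = ENNReal.ofReal (τ ^ Module.finrank ℝ E) * μ (closedBall x r) := by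
  rw [Measure.addHaar_closedBall_mul_of_pos μ x hτ, Measure.addHaar_closedBall_center μ x]

theorem stmt_7_general {α ι : Type*} [Countable ι] [PseudoMetricSpace α] [MeasurableSpace α]
    [OpensMeasurableSpace α] {μ : Measure α} [SigmaFinite μ] {p q : ℝ} (hpq : p.HolderConjugate q)
    {τ : ℝ} (hτ : 3 < τ) {D K : ℝ≥0∞} {x : ι → α} {r : ι → ℝ} {R : ι → Set α}
    (hD : ∀ i, μ (closedBall (x i) (τ * r i)) ≤ D * μ (closedBall (x i) (r i)))
    (hball_top : ∀ i, μ (closedBall (x i) (r i)) ≠ ∞) (hR : ∀ i, MeasurableSet (R i))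
    (hsub : ∀ i, R i ⊆ closedBall (x i) (r i))
    (hK : ∀ i, μ (closedBall (x i) (r i)) ≤ K * μ (R i)) (a : ι → ℝ≥0∞) :
    (∫⁻ z, (∑' i, a i * (closedBall (x i) (r i)).indicator (1 : α → ℝ≥0∞) z) ^ p ∂μ) ^ (1 / p) ≤
      K * (2 * (ENNReal.ofReal p * D) ^ (1 / q)) *
        (∫⁻ z, (∑' i, a i * (R i).indicator (1 : α → ℝ≥0∞) z) ^ p ∂μ) ^ (1 / p) := by
  refine rpow_lintegral_tsum_indicator_le_of_maximalFunction_le hpq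
    (fun _ => measurableSet_closedBall) hR hsub hball_top hK (fun g hg => ?_) a
  rw [hpq.symm.conjugate_eq]
  exact rpow_lintegral_maximalFunction_rpow_le hpq.symm.lt hτ hD hg

/-- Let `1 < p < ∞` and let `{Q_m}` be a locally finite family of cubes (closed sup-norm
balls) in `ℝⁿ` with subcubes `R_m ⊆ Q_m` satisfying `|Q_m| ≤ σ^n |R_m|` for a fixed `σ ≥ 1`.
Then for all nonnegative scalars `a_m`,
`‖∑_m a_m χ_{Q_m}‖_{L^p} ≤ c(n,p,σ) ‖∑_m a_m χ_{R_m}‖_{L^p}`. -/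
theorem stmt_7 (n : ℕ) (p : ℝ) (hp : 1 < p) (σ : ℝ) (hσ : 1 ≤ σ) :
    ∃ c : ℝ≥0∞, c ≠ ∞ ∧
      ∀ (x y : ℕ → (Fin n → ℝ)) (r s : ℕ → ℝ),
        (∀ m, 0 < r m) → (∀ m, 0 < s m) →
        LocallyFinite (fun m => closedBall (x m) (r m)) →
        (∀ m, closedBall (y m) (s m) ⊆ closedBall (x m) (r m)) →
        (∀ m, volume (closedBall (x m) (r m)) ≤
          ENNReal.ofReal (σ ^ n) * volume (closedBall (y m) (s m))) →
        ∀ a : ℕ → ℝ≥0∞,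
          (∫⁻ z, (∑' m, a m * (closedBall (x m) (r m)).indicator
            (1 : (Fin n → ℝ) → ℝ≥0∞) z) ^ p) ^ (1 / p)
          ≤ c * (∫⁻ z, (∑' m, a m * (closedBall (y m) (s m)).indicator
            (1 : (Fin n → ℝ) → ℝ≥0∞) z) ^ p) ^ (1 / p) := by
  have hpq := Real.HolderConjugate.conjExponent hp
  refine ⟨_, ?_, fun x y r s _ _ _ hsub hvol a =>
    stmt_7_general hpq (by norm_num : (3 : ℝ) < 5)
      (fun m =>
        (addHaar_closedBall_mul_eq_mul_addHaar_closedBall volume (x m) (by norm_num) (r m)).le)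
      (fun _ => measure_closedBall_lt_top.ne) (fun _ => measurableSet_closedBall) hsub hvol a⟩
  have := hpq.symm.one_div_nonneg
  finiteness
end

section
/- Let S be a d-set in ℝ^n with n−1<d≤n, R>0, and let cubes Q = Q(x_Q,r_Q) and Q' = Q(x_{Q'},r_{Q'}) satisfy x_{Q'} ∈ S, Q' ⊂ Q, and 0 < r_Q ≤ R r_{Q'} ≤ R². Then for every polynomial p of degree at most k and all 1 ≤ u,r ≤ ∞: ( |Q|^{-1} ∫_Q |p|^r dx )^{1/r} ≤ C ( H^d(Q'∩S)^{-1} ∫_{Q'∩S} |p|^u dH^d )^{1/u}, with C depending on S, R, n, u, r, k. -/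
open Metric MeasureTheory
open scoped ENNReal

/-- Functions `ℝⁿ → ℝ` given by polynomials of degree at most `k`. -/
def degLE (n k : ℕ) : Set ((Fin n → ℝ) → ℝ) :=
  {P | ∃ q : MvPolynomial (Fin n) ℝ, q.totalDegree ≤ k ∧ ∀ x, P x = MvPolynomial.eval x q}

/-!
The zero set of a nonzero polynomial on `ℝⁿ` has dimension at most `n - 1 < d`, hence is
`μH[d]`-null. Covering it by small open balls with a small sum of `d`-th powers of radii gives a
neighbourhood that is small simultaneously for all measures `ν` satisfying `ν (B(x, ρ)) ≤ c ρ ^ d`.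
By compactness of the unit sphere of the space of polynomials of degree at most `k`, there is then a
single `ε > 0` such that each such `ν` gives little mass to every sublevel set `{|p| < ε sup |p|}`.

A similarity carries `Q'` to a fixed cube and the restriction of `H^d` to `S` to a measure with this
growth, uniformly in `Q'`. As `Q` lies in a fixed dilate of `Q'`, the inequality
`|p| ≥ ε sup_Q |p|` holds on at least half of `Q' ∩ S`, and Chebyshev's inequality bounds
`sup_Q |p|` by the `L^u` mean of `p` over `Q' ∩ S`.
-/

open Filter Set MvPolynomial
open Module (finrank finrank_fintype_fun_eq_card finrank_self)
open scoped Topology ProbabilityTheory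

section Algebra

variable {σ R : Type*} [CommSemiring R]

theorem totalDegree_pderiv_le (i : σ) (p : MvPolynomial σ R) :
    (pderiv i p).totalDegree ≤ p.totalDegree - 1 := by
  refine Finset.sup_le fun e he ↦ ?_
  rw [mem_support_iff, coeff_pderiv] at he
  have hdeg := le_totalDegree (mem_support_iff.2 (left_ne_zero_of_mul he))
  rw [Finsupp.sum_add_index' (by simp) (by simp), Finsupp.sum_single_index rfl] at hdeg
  omega

theorem exists_pderiv_ne_zero [CharZero R] [NoZeroDivisors R] {p : MvPolynomial σ R}
    (hp : p.totalDegree ≠ 0) : ∃ i, pderiv i p ≠ 0 := by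
  have ⟨e, he, i, hi⟩ : ∃ e ∈ p.support, ∃ i, e i ≠ 0 := by
    simpa [totalDegree_eq_zero_iff] using hp
  refine ⟨i, ne_of_apply_ne (coeff (e - Finsupp.single i 1)) ?_⟩
  have hle : Finsupp.single i 1 ≤ e := Finsupp.single_le_iff.2 (Nat.one_le_iff_ne_zero.2 hi)
  rw [coeff_pderiv, tsub_add_cancel_of_le hle, coeff_zero]
  exact mul_ne_zero (mem_support_iff.1 he) (Nat.cast_add_one_ne_zero _)

theorem totalDegree_aeval_le {τ : Type*} {g : σ → MvPolynomial τ R} {D : ℕ}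
    (hg : ∀ i, (g i).totalDegree ≤ D) (p : MvPolynomial σ R) :
    (aeval g p).totalDegree ≤ p.totalDegree * D := by
  rw [aeval_def, eval₂_eq]
  refine totalDegree_finsetSum_le fun e he ↦ ?_
  calc (C (coeff e p) * ∏ i ∈ e.support, g i ^ e i).totalDegree
      ≤ ∑ i ∈ e.support, (g i ^ e i).totalDegree := by
        grw [totalDegree_mul, totalDegree_C, zero_add, totalDegree_finsetProd]
    _ ≤ ∑ i ∈ e.support, e i * D := by
        gcongr with i
        grw [totalDegree_pow, hg i]
    _ = (∑ i ∈ e.support, e i) * D := by rw [Finset.sum_mul]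
    _ ≤ p.totalDegree * D := by grw [← le_totalDegree he]; rfl

end Algebra

theorem dimH_regularLevelSet_le {E F : Type*} [NormedAddCommGroup E] [NormedSpace ℝ E]
    [FiniteDimensional ℝ E] [NormedAddCommGroup F] [NormedSpace ℝ F] [FiniteDimensional ℝ F]
    {f : E → F} {f' : E → E →L[ℝ] F} (hf : ∀ x, HasStrictFDerivAt f (f' x) x) (c : F) :
    dimH {x | f x = c ∧ (f' x).range = ⊤} ≤ (finrank ℝ E - finrank ℝ F : ℕ) := by
  by_contra! hlt
  obtain ⟨x, ⟨hxc, hsurj⟩, hx⟩ := exists_mem_nhdsWithin_lt_dimH_of_lt_dimH hlt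
  set φ := (hf x).implicitFunction f (f' x) hsurj c with hφ
  obtain ⟨K, V, hV, hφV⟩ : ∃ K, ∃ V ∈ 𝓝 (0 : (f' x).ker), LipschitzOnWith K φ V := by
    subst hxc
    exact ((hf x).to_implicitFunction hsurj).exists_lipschitzOnWith
  let π := (hf x).implicitToOpenPartialHomeomorph f (f' x) hsurj
  have hπV : ∀ᶠ y in 𝓝 x, (π y).2 ∈ V := by
    have hcont : ContinuousAt π x :=
      π.continuousAt ((hf x).mem_implicitToOpenPartialHomeomorph_source hsurj)
    refine (continuous_snd.continuousAt.comp hcont).eventually_mem ?_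
    simpa [π] using hV
  have himage : φ '' V ∈ 𝓝[{x | f x = c ∧ (f' x).range = ⊤}] x := by
    filter_upwards [mem_nhdsWithin_of_mem_nhds hπV, self_mem_nhdsWithin,
      mem_nhdsWithin_of_mem_nhds ((hf x).eq_implicitFunction hsurj)] with y hyV hy hyφ
    exact ⟨_, hyV, by rwa [hy.1] at hyφ⟩
  have hker : finrank ℝ (f' x).ker = finrank ℝ E - finrank ℝ F := by
    have := (f' x).toLinearMap.finrank_range_add_finrank_ker
    rw [hsurj, finrank_top] at this
    omega
  refine (hx _ himage).not_ge ?_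
  calc dimH (φ '' V) ≤ dimH V := hφV.dimH_image_le
    _ ≤ dimH (univ : Set (f' x).ker) := dimH_mono (subset_univ V)
    _ = (finrank ℝ E - finrank ℝ F : ℕ) := by rw [Real.dimH_univ_eq_finrank, hker]

section ZeroSet

variable {σ : Type*} [Fintype σ]

theorem hasStrictFDerivAt_eval (p : MvPolynomial σ ℝ) (x : σ → ℝ) :
    HasStrictFDerivAt (fun x ↦ eval x p)
      (∑ i, eval x (pderiv i p) • (.proj i : (σ → ℝ) →L[ℝ] ℝ)) x := by
  classical
  induction p using MvPolynomial.induction_on with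
  | C a => simpa using hasStrictFDerivAt_const a x
  | add p q hp hq =>
    simp only [map_add, add_smul, Finset.sum_add_distrib]
    exact hp.add hq
  | mul_X p i hp =>
    simp only [map_mul, eval_X]
    refine (hp.mul (ContinuousLinearMap.proj (R := ℝ) i).hasStrictFDerivAt).congr_fderiv ?_
    ext v
    simp [pderiv_X, Pi.single_apply, add_mul, Finset.sum_add_distrib, Finset.mul_sum,
      apply_ite (eval x), mul_assoc]

theorem dimH_setOf_eval_eq_zero_le {p : MvPolynomial σ ℝ} (hp : p ≠ 0) :
    dimH {x | eval x p = 0} ≤ (Fintype.card σ - 1 : ℕ) := by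
  induction hN : p.totalDegree using Nat.strong_induction_on generalizing p with | _ N ih
  subst hN
  by_cases hdeg : p.totalDegree = 0
  · rw [totalDegree_eq_zero_iff_eq_C.1 hdeg] at hp ⊢
    simp_all
  obtain ⟨i, hi⟩ := exists_pderiv_ne_zero hdeg
  -- A zero of `p` is either a regular point of `p` or a zero of its nonzero derivative `∂ᵢ p`.
  have hcritical : dimH {x | eval x (pderiv i p) = 0} ≤ (Fintype.card σ - 1 : ℕ) :=
    ih _ (by have := totalDegree_pderiv_le i p; omega) hi rfl
  have hregular := dimH_regularLevelSet_le (hasStrictFDerivAt_eval p) 0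
  rw [finrank_fintype_fun_eq_card, finrank_self] at hregular
  refine (dimH_mono fun x hx ↦ ?_).trans
    ((dimH_union _ _).trans_le (max_le hregular hcritical))
  refine or_iff_not_imp_right.2 fun hxi ↦ ⟨hx, ?_⟩
  refine LinearMap.range_eq_top.2 (LinearMap.surjective fun h0 ↦ hxi ?_)
  classical
  simpa [Pi.single_apply] using LinearMap.congr_fun h0 (Pi.single i 1)

theorem hausdorffMeasure_setOf_eval_eq_zero {d : ℝ} (hd : Fintype.card σ - 1 < d)
    {p : MvPolynomial σ ℝ} (hp : p ≠ 0) : μH[d] {x | eval x p = 0} = 0 := by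
  cases isEmpty_or_nonempty σ with
  | inl _ =>
    rw [eq_C_of_isEmpty p] at hp ⊢
    simp_all
  | inr _ =>
    rw [← Nat.cast_pred Fintype.card_pos] at hd
    lift d to NNReal using (Nat.cast_nonneg _).trans hd.le
    refine hausdorffMeasure_of_dimH_lt ((dimH_setOf_eval_eq_zero_le hp).trans_lt ?_)
    exact_mod_cast hd

end ZeroSet

section Growth

variable {X Y : Type*} [PseudoMetricSpace X] [MeasurableSpace X] [PseudoMetricSpace Y]
  [MeasurableSpace Y]

/-- The upper regularity condition `ν (B(x, ρ)) ≤ c ρ ^ d` at the scales `ρ ≤ ρ₀`. The centre `x` is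
any point of the space, not only one of the support of `ν`, so that the condition passes to
restrictions and to pullbacks along similarities. -/
def HasBallGrowth (ν : Measure X) (d ρ₀ : ℝ) (c : ℝ≥0∞) : Prop :=
  ∀ x ρ, 0 < ρ → ρ ≤ ρ₀ → ν (closedBall x ρ) ≤ c * ENNReal.ofReal ρ ^ d

theorem HasBallGrowth.mono {ν : Measure X} {d ρ₀ ρ₁ : ℝ} {c : ℝ≥0∞}
    (hν : HasBallGrowth ν d ρ₀ c) (hρ : ρ₁ ≤ ρ₀) : HasBallGrowth ν d ρ₁ c :=
  fun x ρ hρ₀ hρ₁ ↦ hν x ρ hρ₀ (hρ₁.trans hρ)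

theorem HasBallGrowth.comap {ν : Measure Y} {d ρ₀ : ℝ} {c : ℝ≥0∞} (hν : HasBallGrowth ν d ρ₀ c)
    (hd : 0 ≤ d) {f : X → Y} (hf : MeasurableEmbedding f) {r : ℝ} (hr : 0 < r)
    (hfr : ∀ x y, dist (f x) (f y) ≤ r * dist x y) :
    HasBallGrowth (ν.comap f) d (ρ₀ / r) (c * ENNReal.ofReal r ^ d) := by
  intro x ρ hρ hρr
  have himage : f '' closedBall x ρ ⊆ closedBall (f x) (r * ρ) := by
    rintro _ ⟨y, hy, rfl⟩
    exact (hfr y x).trans (by gcongr; exact hy)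
  calc ν.comap f (closedBall x ρ) ≤ ν (closedBall (f x) (r * ρ)) := by
        rw [hf.comap_apply]; exact measure_mono himage
    _ ≤ c * ENNReal.ofReal (r * ρ) ^ d := hν _ _ (by positivity) ((le_div_iff₀' hr).1 hρr)
    _ = c * ENNReal.ofReal r ^ d * ENNReal.ofReal ρ ^ d := by
        rw [ENNReal.ofReal_mul hr.le, ENNReal.mul_rpow_of_nonneg _ _ hd, mul_assoc]

-- The supremum, which vanishes for `t = ∅` even if `d = 0`, is the form in which the Hausdorff
-- measure sums `ediam t ^ d`.
theorem exists_isOpen_superset_forall_measure_le_ediam {d ρ₀ : ℝ} (hd : 0 ≤ d) {t : Set X}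
    (hdiam : ediam t < ENNReal.ofReal ρ₀) {δ : ℝ≥0∞} (hδ : δ ≠ 0) :
    ∃ U, IsOpen U ∧ t ⊆ U ∧ ∀ (ν : Measure X) (c : ℝ≥0∞), HasBallGrowth ν d ρ₀ c →
      ν U ≤ c * ((⨆ _ : t.Nonempty, ediam t ^ d) + δ) := by
  rcases t.eq_empty_or_nonempty with rfl | ⟨x, hx⟩
  · exact ⟨∅, isOpen_empty, subset_rfl, by simp⟩
  rw [ciSup_pos ⟨x, hx⟩]
  have hfin : ediam t ≠ ∞ := hdiam.ne_top
  have hcont : Continuous fun ρ ↦ ENNReal.ofReal ρ ^ d :=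
    ENNReal.continuous_rpow_const.comp ENNReal.continuous_ofReal
  have hpow : ENNReal.ofReal (ediam t).toReal ^ d < ediam t ^ d + δ := by
    rw [ENNReal.ofReal_toReal hfin]
    exact ENNReal.lt_add_right (ENNReal.rpow_ne_top_of_nonneg hd hfin) hδ
  have hρ₀ : (ediam t).toReal < ρ₀ := (ENNReal.lt_ofReal_iff_toReal_lt hfin).1 hdiam
  have hnear : ∀ᶠ ρ in 𝓝[>] (ediam t).toReal, ENNReal.ofReal ρ ^ d < ediam t ^ d + δ ∧ ρ < ρ₀ :=
    nhdsWithin_le_nhds ((hcont.continuousAt.eventually_lt_const hpow).and (eventually_lt_nhds hρ₀))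
  obtain ⟨ρ, ⟨hρd, hρρ₀⟩, hρ : _ < ρ⟩ := (hnear.and self_mem_nhdsWithin).exists
  refine ⟨ball x ρ, isOpen_ball, fun y hy ↦ ?_, fun ν c hν ↦ ?_⟩
  · rw [mem_ball, dist_edist]
    exact (ENNReal.toReal_mono hfin (edist_le_ediam_of_mem hy hx)).trans_lt hρ
  · calc ν (ball x ρ) ≤ ν (closedBall x ρ) := measure_mono ball_subset_closedBall
      _ ≤ c * ENNReal.ofReal ρ ^ d := hν x ρ (ENNReal.toReal_nonneg.trans_lt hρ) hρρ₀.le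
      _ ≤ c * (ediam t ^ d + δ) := by gcongr

end Growth

section NullSet

variable {X : Type*} [MetricSpace X] [MeasurableSpace X] [BorelSpace X]

theorem exists_isOpen_superset_forall_measure_le_of_hausdorffMeasure_eq_zero {d ρ₀ : ℝ}
    (hd : 0 ≤ d) (hρ₀ : 0 < ρ₀) {Z : Set X} (hZ : μH[d] Z = 0) {η : ℝ≥0∞} (hη : η ≠ 0) :
    ∃ U, IsOpen U ∧ Z ⊆ U ∧ ∀ (ν : Measure X) (c : ℝ≥0∞), HasBallGrowth ν d ρ₀ c →
      ν U ≤ c * η := by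
  have ⟨t, hZt, htρ, hsum⟩ : ∃ t : ℕ → Set X, Z ⊆ ⋃ i, t i ∧
      (∀ i, ediam (t i) ≤ ENNReal.ofReal (ρ₀ / 2)) ∧
      ∑' i, ⨆ _ : (t i).Nonempty, ediam (t i) ^ d < η / 2 := by
    rw [Measure.hausdorffMeasure_apply] at hZ
    have hscale := ENNReal.iSup_eq_zero.1 (ENNReal.iSup_eq_zero.1 hZ (ENNReal.ofReal (ρ₀ / 2)))
      (ENNReal.ofReal_pos.2 (half_pos hρ₀))
    simpa only [iInf_lt_iff, exists_prop] using hscale.trans_lt (ENNReal.half_pos hη)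
  obtain ⟨δ, hδ, hδsum⟩ := ENNReal.exists_pos_sum_of_countable (ENNReal.half_pos hη).ne' ℕ
  choose U hUopen htU hνU using fun i ↦ exists_isOpen_superset_forall_measure_le_ediam hd
    ((htρ i).trans_lt ((ENNReal.ofReal_lt_ofReal_iff hρ₀).2 (half_lt_self hρ₀)))
    (ENNReal.coe_ne_zero.2 (hδ i).ne')
  refine ⟨⋃ i, U i, isOpen_iUnion hUopen, hZt.trans (iUnion_mono htU), fun ν c hν ↦ ?_⟩
  calc ν (⋃ i, U i)
      ≤ ∑' i, c * ((⨆ _ : (t i).Nonempty, ediam (t i) ^ d) + δ i) :=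
        (measure_iUnion_le U).trans (ENNReal.tsum_le_tsum fun i ↦ hνU i ν c hν)
    _ = c * (∑' i, (⨆ _ : (t i).Nonempty, ediam (t i) ^ d) + ∑' i, (δ i : ℝ≥0∞)) := by
        rw [ENNReal.tsum_mul_left, ENNReal.tsum_add]
    _ ≤ c * (η / 2 + η / 2) := by gcongr
    _ = c * η := by rw [ENNReal.add_halves]

theorem eventually_forall_measure_sublevel_le [CompactSpace X] {d ρ₀ : ℝ}
    (hd : 0 ≤ d) (hρ₀ : 0 < ρ₀) {w : C(X, ℝ)} (hw : μH[d] {x | w x = 0} = 0) {η : ℝ≥0∞}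
    (hη : η ≠ 0) :
    ∀ᶠ z : ℝ × C(X, ℝ) in 𝓝 (0, w), ∀ (ν : Measure X) (c : ℝ≥0∞), HasBallGrowth ν d ρ₀ c →
      ν {x | |z.2 x| < z.1} ≤ c * η := by
  obtain ⟨U, hUopen, hZU, hνU⟩ :=
    exists_isOpen_superset_forall_measure_le_of_hausdorffMeasure_eq_zero hd hρ₀ hw hη
  have hoff : ∀ᶠ z : ℝ × C(X, ℝ) in 𝓝 (0, w), ∀ x ∈ Uᶜ, z.1 < |z.2 x| := by
    refine hUopen.isClosed_compl.isCompact.eventually_forall_of_forall_eventually fun x hx ↦ ?_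
    have hcont : Continuous fun z : (ℝ × C(X, ℝ)) × X ↦ |z.1.2 z.2| := by fun_prop
    exact (continuous_fst.comp continuous_fst).continuousAt.eventually_lt hcont.continuousAt
      (abs_pos.2 fun h0 ↦ hx (hZU h0))
  filter_upwards [hoff] with z hz ν c hν
  exact (measure_mono fun x hx ↦ by_contra fun hxU ↦ (hz x hxU).not_gt hx).trans (hνU ν c hν)

theorem exists_forall_measure_sublevel_le [CompactSpace X]
    {W : Submodule ℝ C(X, ℝ)} [FiniteDimensional ℝ W] {d ρ₀ : ℝ} (hd : 0 ≤ d) (hρ₀ : 0 < ρ₀)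
    (hW : ∀ w ∈ W, w ≠ 0 → μH[d] {x | w x = 0} = 0) {η : ℝ≥0∞} (hη : η ≠ 0) :
    ∃ ε > 0, ∀ w ∈ W, ∀ (ν : Measure X) (c : ℝ≥0∞), HasBallGrowth ν d ρ₀ c →
      ν {x | |w x| < ε * ‖w‖} ≤ c * η := by
  have hsphere : ∀ᶠ ε : ℝ in 𝓝 0, ∀ w ∈ sphere (0 : W) 1, ∀ (ν : Measure X) (c : ℝ≥0∞),
      HasBallGrowth ν d ρ₀ c → ν {x | |(w : C(X, ℝ)) x| < ε} ≤ c * η := by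
    refine (isCompact_sphere (0 : W) 1).eventually_forall_of_forall_eventually fun w hw ↦ ?_
    have hw0 : (w : C(X, ℝ)) ≠ 0 := by
      simpa using ne_zero_of_mem_unit_sphere ⟨w, hw⟩
    have hcoe : Continuous fun z : ℝ × W ↦ (z.1, (z.2 : C(X, ℝ))) := by fun_prop
    exact hcoe.tendsto (0, w) (eventually_forall_measure_sublevel_le hd hρ₀ (hW w w.2 hw0) hη)
  obtain ⟨ε, hε, hεpos : 0 < ε⟩ :=
    ((hsphere.filter_mono (nhdsWithin_le_nhds (s := Ioi 0))).and self_mem_nhdsWithin).exists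
  refine ⟨ε, hεpos, fun w hw ν c hν ↦ ?_⟩
  rcases eq_or_ne w 0 with rfl | hw0
  · simp
  have hnorm : 0 < ‖w‖ := norm_pos_iff.2 hw0
  have hunit : ‖w‖⁻¹ • (⟨w, hw⟩ : W) ∈ sphere (0 : W) 1 := by
    rw [mem_sphere_zero_iff_norm]
    change ‖‖w‖⁻¹ • w‖ = 1
    rw [norm_smul, norm_inv, norm_norm, inv_mul_cancel₀ hnorm.ne']
  refine (measure_mono fun x hx ↦ ?_).trans (hε _ hunit ν c hν)
  simpa [abs_mul, inv_mul_lt_iff₀ hnorm, mul_comm] using hx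

end NullSet

/-- `S` is a `d`-set for `μ`, with constants `c₁` and `c₂`: at the scales `0 < r ≤ 1` the portions
`B(w, r) ∩ S` with `w ∈ S` have measure comparable to `r ^ d`. The `d`-sets of the paper are the
closed ones for the Hausdorff measure `μH[d]`; closedness is not part of this definition. -/
structure AhlforsRegularOn {X : Type*} [PseudoMetricSpace X] [MeasurableSpace X] (μ : Measure X)
    (S : Set X) (d : ℝ) (c₁ c₂ : ℝ≥0∞) : Prop where
  le_measure : ∀ w ∈ S, ∀ r, 0 < r → r ≤ 1 → c₁ * ENNReal.ofReal r ^ d ≤ μ (closedBall w r ∩ S)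
  measure_le : ∀ w ∈ S, ∀ r, 0 < r → r ≤ 1 → μ (closedBall w r ∩ S) ≤ c₂ * ENNReal.ofReal r ^ d

namespace AhlforsRegularOn

variable {X : Type*} [PseudoMetricSpace X] [MeasurableSpace X] {μ : Measure X} {S : Set X} {d : ℝ}
  {c₁ c₂ : ℝ≥0∞} {x : X} {r : ℝ}

theorem nonneg (h : AhlforsRegularOn μ S d c₁ c₂) (hc₁ : c₁ ≠ 0) (hc₂ : c₂ ≠ ∞) (hx : x ∈ S) :
    0 ≤ d := by
  by_contra! hd
  have hcont : Continuous fun r ↦ ENNReal.ofReal r ^ d :=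
    ENNReal.continuous_rpow_const.comp ENNReal.continuous_ofReal
  have hlim : Tendsto (fun r ↦ c₁ * ENNReal.ofReal r ^ d) (𝓝[>] 0) (𝓝 ∞) := by
    have h0 := ENNReal.Tendsto.const_mul (a := c₁) (hcont.tendsto 0)
      (.inl (by simp [ENNReal.zero_rpow_of_neg hd]))
    rw [ENNReal.ofReal_zero, ENNReal.zero_rpow_of_neg hd, ENNReal.mul_top hc₁] at h0
    exact h0.mono_left nhdsWithin_le_nhds
  have hbdd : ∀ᶠ r in 𝓝[>] (0 : ℝ), c₁ * ENNReal.ofReal r ^ d ≤ c₂ := by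
    filter_upwards [Ioc_mem_nhdsGT one_pos] with r hr
    calc c₁ * ENNReal.ofReal r ^ d ≤ μ (closedBall x r ∩ S) := h.le_measure x hx r hr.1 hr.2
      _ ≤ μ (closedBall x 1 ∩ S) := by gcongr; exact hr.2
      _ ≤ c₂ := by simpa using h.measure_le x hx 1 one_pos le_rfl
  exact hc₂ (top_le_iff.1 (le_of_tendsto hlim hbdd))

theorem le_measure_of_le (h : AhlforsRegularOn μ S d c₁ c₂) {R : ℝ} (hR : 1 ≤ R) (hx : x ∈ S)
    (hr : 0 < r) (hrR : r ≤ R) :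
    c₁ * ENNReal.ofReal (r / R) ^ d ≤ μ (closedBall x r ∩ S) := by
  have hR0 : 0 < R := one_pos.trans_le hR
  refine (h.le_measure x hx (r / R) (by positivity) ((div_le_one hR0).2 hrR)).trans ?_
  gcongr
  exact div_le_self hr.le hR

theorem measure_ne_zero (h : AhlforsRegularOn μ S d c₁ c₂) (hc₁ : c₁ ≠ 0) (hx : x ∈ S)
    (hr : 0 < r) : μ (closedBall x r ∩ S) ≠ 0 := by
  have hpos : 0 < ENNReal.ofReal (r / max r 1) := by
    rw [ENNReal.ofReal_pos]; positivity
  refine (lt_of_lt_of_le ?_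
    (h.le_measure_of_le (le_max_right r 1) hx hr (le_max_left r 1))).ne'
  exact ENNReal.mul_pos hc₁ (ENNReal.rpow_pos hpos ENNReal.ofReal_ne_top).ne'

theorem measure_ne_top [ProperSpace X] (h : AhlforsRegularOn μ S d c₁ c₂) (hc₂ : c₂ ≠ ∞) :
    μ (closedBall x r ∩ S) ≠ ∞ := by
  obtain ⟨t, htS, htfin, hcover⟩ := finite_approx_of_totallyBounded
    ((isCompact_closedBall x r).totallyBounded.subset inter_subset_left) 1 one_pos
  refine ne_top_of_le_ne_top ?_ (measure_mono (subset_inter hcover inter_subset_right))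
  rw [iUnion₂_inter]
  refine ((measure_biUnion_lt_top htfin fun w hw ↦ ?_)).ne
  calc μ (ball w 1 ∩ S) ≤ μ (closedBall w 1 ∩ S) := by gcongr; exact ball_subset_closedBall
    _ ≤ c₂ := by simpa using h.measure_le w (htS hw).2 1 one_pos le_rfl
    _ < ∞ := hc₂.lt_top

theorem hasBallGrowth_restrict [OpensMeasurableSpace X] (h : AhlforsRegularOn μ S d c₁ c₂)
    (hd : 0 ≤ d) : HasBallGrowth (μ.restrict S) d (1 / 2) (c₂ * ENNReal.ofReal 2 ^ d) := by
  intro x ρ hρ hρ'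
  rw [Measure.restrict_apply measurableSet_closedBall]
  rcases (closedBall x ρ ∩ S).eq_empty_or_nonempty with hempty | ⟨w, hwx, hwS⟩
  · simp [hempty]
  have hrecenter : closedBall x ρ ⊆ closedBall w (2 * ρ) := by
    refine closedBall_subset_closedBall' ?_
    rw [dist_comm]
    linarith [mem_closedBall.1 hwx]
  calc μ (closedBall x ρ ∩ S) ≤ μ (closedBall w (2 * ρ) ∩ S) := by gcongr
    _ ≤ c₂ * ENNReal.ofReal (2 * ρ) ^ d := h.measure_le w hwS _ (by positivity) (by linarith)
    _ = c₂ * ENNReal.ofReal 2 ^ d * ENNReal.ofReal ρ ^ d := by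
      rw [ENNReal.ofReal_mul zero_le_two, ENNReal.mul_rpow_of_nonneg _ _ hd, mul_assoc]

end AhlforsRegularOn

section Means

open ProbabilityTheory

variable {α F : Type*} [MeasurableSpace α] [NormedAddCommGroup F] {μ : Measure α} {f : α → F}
  {u a : ℝ≥0∞}

theorem mul_measure_rpow_le_eLpNorm (hf : StronglyMeasurable f) (hu : u ≠ 0)
    (ha : μ {x | a ≤ ‖f x‖ₑ} ≠ 0) :
    a * μ {x | a ≤ ‖f x‖ₑ} ^ (1 / u.toReal) ≤ eLpNorm f u μ := by
  have hmeas : MeasurableSet {x | a ≤ ‖f x‖ₑ} := measurableSet_le measurable_const hf.enorm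
  calc a * μ {x | a ≤ ‖f x‖ₑ} ^ (1 / u.toReal)
      = eLpNorm ({x | a ≤ ‖f x‖ₑ}.indicator fun _ ↦ a) u μ := by
        rw [eLpNorm_indicator_const' hmeas ha hu, enorm_eq_self]
    _ ≤ eLpNorm f u μ := eLpNorm_mono_enorm fun x ↦ by
        rw [enorm_eq_self]
        exact indicator_le (fun _ hx ↦ hx) x

theorem mul_inv_two_rpow_le_eLpNorm_cond {T : Set α} (hT₀ : μ T ≠ 0) (hT : μ T ≠ ∞)
    (hf : StronglyMeasurable f) (hu : u ≠ 0) (ha : μ {x ∈ T | ‖f x‖ₑ < a} ≤ μ T / 2) :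
    a * 2⁻¹ ^ (1 / u.toReal) ≤ eLpNorm f u μ[|T] := by
  have := cond_isProbabilityMeasure_of_finite hT₀ hT
  have hmeas : MeasurableSet {x | ‖f x‖ₑ < a} := measurableSet_lt hf.enorm measurable_const
  have hsmall : μ[{x | ‖f x‖ₑ < a} | T] ≤ 2⁻¹ := by
    rw [cond_apply' hmeas]
    calc (μ T)⁻¹ * μ (T ∩ {x | ‖f x‖ₑ < a}) ≤ (μ T)⁻¹ * (μ T / 2) := by gcongr; exact ha
      _ = 2⁻¹ := by
        rw [div_eq_mul_inv, ← mul_assoc, ENNReal.inv_mul_cancel hT₀ hT, one_mul]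
  have hlarge : 2⁻¹ ≤ μ[{x | a ≤ ‖f x‖ₑ} | T] := by
    have hcompl : {x | a ≤ ‖f x‖ₑ} = {x | ‖f x‖ₑ < a}ᶜ := by ext; simp
    rw [hcompl, prob_compl_eq_one_sub hmeas, ← ENNReal.one_sub_inv_two]
    gcongr
  refine le_trans ?_ (mul_measure_rpow_le_eLpNorm hf hu (a := a) ?_)
  · gcongr
  · exact (lt_of_lt_of_le (by simp) hlarge).ne'

theorem eLpNorm_cond_le_of_forall_mem {T : Set α} (hT : MeasurableSet T)
    (hf : ∀ x ∈ T, ‖f x‖ₑ ≤ a) : eLpNorm f u μ[|T] ≤ a := by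
  calc eLpNorm f u μ[|T] ≤ a * μ[univ | T] ^ (u.toReal)⁻¹ :=
        eLpNorm_le_of_ae_enorm_bound (ae_cond_of_forall_mem hT hf)
    _ ≤ a * 1 ^ (u.toReal)⁻¹ := by gcongr; exact prob_le_one
    _ = a := by rw [ENNReal.one_rpow, mul_one]

end Means

section Rescale

variable {E : Type*} [NormedAddCommGroup E] [NormedSpace ℝ E] {x : E} {r L : ℝ}

/-- For `0 < r`, the similarity of ratio `r` from the closed ball of radius `L` about the origin
onto the closed ball of radius `L * r` about `x`. -/
def rescale (x : E) (r L : ℝ) (y : closedBall (0 : E) L) : E := x + r • (y : E)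

theorem dist_rescale (hr : 0 ≤ r) (y z : closedBall (0 : E) L) :
    dist (rescale x r L y) (rescale x r L z) = r * dist y z := by
  rw [rescale, rescale, dist_add_left, dist_smul₀, Real.norm_of_nonneg hr, Subtype.dist_eq]

theorem range_rescale (hr : 0 < r) : range (rescale x r L) = closedBall x (L * r) := by
  ext z
  refine ⟨?_, fun hz ↦ ⟨⟨r⁻¹ • (z - x), ?_⟩, ?_⟩⟩
  · rintro ⟨y, rfl⟩
    rw [rescale, mem_closedBall, dist_self_add_left, norm_smul, Real.norm_of_nonneg hr.le, mul_comm]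
    gcongr
    exact mem_closedBall_zero_iff.1 y.2
  · rw [mem_closedBall_zero_iff, norm_smul, norm_inv, Real.norm_of_nonneg hr.le,
      inv_mul_le_iff₀' hr, ← dist_eq_norm]
    exact hz
  · simp [rescale, smul_inv_smul₀ hr.ne']

theorem measurableEmbedding_rescale [ProperSpace E] [MeasurableSpace E] [BorelSpace E]
    (hr : 0 < r) : MeasurableEmbedding (rescale x r L) := by
  have hinj : (rescale x r L).Injective := fun y z hyz ↦ by
    simpa [hyz, hr.ne'] using dist_rescale (x := x) hr.le y z
  have hcont : Continuous (rescale x r L) := by unfold rescale; fun_prop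
  exact (hcont.isClosedEmbedding hinj).measurableEmbedding

end Rescale

section Polynomials

variable {σ : Type*}

theorem exists_eval_eq_eval_add_smul (p : MvPolynomial σ ℝ) (x : σ → ℝ) (r : ℝ) :
    ∃ q : MvPolynomial σ ℝ, q.totalDegree ≤ p.totalDegree ∧
      ∀ y, eval y q = eval (x + r • y) p := by
  refine ⟨aeval (fun i ↦ C (x i) + C r * X i) p, ?_, fun y ↦ ?_⟩
  · refine (totalDegree_aeval_le (D := 1) (fun i ↦ ?_) p).trans (mul_one _).le
    grw [totalDegree_add, totalDegree_mul, totalDegree_C, totalDegree_C, totalDegree_X]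
    simp
  · have hcoord : (fun i ↦ aeval y (C (x i) + C r * X i)) = x + r • y := by ext i; simp
    rw [← coe_aeval_eq_eval, RingHom.coe_coe, comp_aeval_apply, hcoord]
    exact DFunLike.congr_fun (coe_aeval_eq_eval _) p

/-- The space of restrictions to `X` of real polynomial functions of total degree at most `k`. -/
noncomputable def polynomialsDegreeLE (X : Set (σ → ℝ)) (k : ℕ) : Submodule ℝ C(X, ℝ) :=
  (restrictTotalDegree σ ℝ k).map
    (aeval fun i ↦ (ContinuousMap.eval i).restrict X).toLinearMap

instance [Finite σ] (X : Set (σ → ℝ)) (k : ℕ) : FiniteDimensional ℝ (polynomialsDegreeLE X k) :=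
  inferInstanceAs (Module.Finite ℝ ((restrictTotalDegree σ ℝ k).map _))

theorem mem_polynomialsDegreeLE {X : Set (σ → ℝ)} {k : ℕ} {w : C(X, ℝ)} :
    w ∈ polynomialsDegreeLE X k ↔
      ∃ p : MvPolynomial σ ℝ, p.totalDegree ≤ k ∧ ∀ x : X, w x = eval x.1 p := by
  have heval (p : MvPolynomial σ ℝ) (x : X) :
      aeval (fun i ↦ (ContinuousMap.eval i).restrict X) p x = eval x.1 p :=
    comp_aeval_apply _ (ContinuousMap.evalAlgHom ℝ ℝ x) p
  simp only [polynomialsDegreeLE, Submodule.mem_map, mem_restrictTotalDegree,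
    AlgHom.toLinearMap_apply, ContinuousMap.ext_iff, heval, eq_comm]

theorem polynomialsDegreeLE.hausdorffMeasure_setOf_eq_zero [Fintype σ] {d : ℝ}
    (hd : Fintype.card σ - 1 < d) (hd₀ : 0 ≤ d) {X : Set (σ → ℝ)} {k : ℕ} {w : C(X, ℝ)}
    (hw : w ∈ polynomialsDegreeLE X k) (hw₀ : w ≠ 0) : μH[d] {x | w x = 0} = 0 := by
  obtain ⟨p, -, hwp⟩ := mem_polynomialsDegreeLE.1 hw
  have hp : p ≠ 0 := by
    rintro rfl
    exact hw₀ (ContinuousMap.ext fun x ↦ by simp [hwp])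
  rw [← isometry_subtype_coe.hausdorffMeasure_image (.inl hd₀)]
  refine measure_mono_null ?_ (hausdorffMeasure_setOf_eval_eq_zero hd hp)
  rintro _ ⟨x, hx, rfl⟩
  exact (hwp x).symm.trans hx

theorem exists_forall_measure_polynomial_sublevel_le [Fintype σ] {d ρ₀ : ℝ}
    (hd : Fintype.card σ - 1 < d) (hd₀ : 0 ≤ d) (hρ₀ : 0 < ρ₀) (L : ℝ) (k : ℕ) {η : ℝ≥0∞}
    (hη : η ≠ 0) :
    ∃ ε > 0, ∀ (ν : Measure (σ → ℝ)) (c : ℝ≥0∞) (x : σ → ℝ) (r : ℝ), 0 < r →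
      HasBallGrowth ν d (ρ₀ * r) c → ∀ p : MvPolynomial σ ℝ, p.totalDegree ≤ k →
        ∀ z ∈ closedBall x (L * r),
          ν {y ∈ closedBall x (L * r) | |eval y p| < ε * |eval z p|} ≤
            c * ENNReal.ofReal r ^ d * η := by
  obtain ⟨ε, hε, hsublevel⟩ := exists_forall_measure_sublevel_le hd₀ hρ₀
    (fun w hw ↦ polynomialsDegreeLE.hausdorffMeasure_setOf_eq_zero hd hd₀ hw)
    (W := polynomialsDegreeLE (closedBall (0 : σ → ℝ) L) k) hη
  refine ⟨ε, hε, fun ν c x r hr hν p hp z hz ↦ ?_⟩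
  obtain ⟨q, hqdeg, hq⟩ := exists_eval_eq_eval_add_smul p x r
  obtain ⟨w, hw⟩ : ∃ w : C(closedBall (0 : σ → ℝ) L, ℝ), ∀ y, w y = eval (rescale x r L y) p :=
    ⟨⟨fun y ↦ eval y.1 q, q.continuous_eval.comp continuous_subtype_val⟩, fun y ↦ hq y.1⟩
  have hwW : w ∈ polynomialsDegreeLE (closedBall 0 L) k :=
    mem_polynomialsDegreeLE.2 ⟨q, hqdeg.trans hp, fun y ↦ (hw y).trans (hq y.1).symm⟩
  have hgrowth := hν.comap hd₀ (measurableEmbedding_rescale (x := x) (L := L) hr) hr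
    fun y z ↦ (dist_rescale hr.le y z).le
  rw [mul_div_cancel_right₀ _ hr.ne'] at hgrowth
  refine le_trans ?_ (hsublevel w hwW _ _ hgrowth)
  rw [(measurableEmbedding_rescale hr).comap_apply]
  refine measure_mono ?_
  rw [← range_rescale hr] at hz ⊢
  obtain ⟨z, rfl⟩ := hz
  rintro _ ⟨⟨y, rfl⟩, hy⟩
  refine ⟨y, ?_, rfl⟩
  rw [← hw, ← hw] at hy
  exact hy.trans_le (by gcongr; exact w.norm_coe_le_norm z)

end Polynomials

namespace AhlforsRegularOn

variable {σ : Type*} [Fintype σ] {μ : Measure (σ → ℝ)} {S : Set (σ → ℝ)} {d : ℝ} {c₁ c₂ : ℝ≥0∞}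
  {R L : ℝ}

theorem exists_forall_measure_polynomial_sublevel_le_half (h : AhlforsRegularOn μ S d c₁ c₂)
    (hc₁ : c₁ ≠ 0) (hc₂ : c₂ ≠ ∞) (hd : Fintype.card σ - 1 < d) (hR : 1 ≤ R) (hL : 1 ≤ L)
    (k : ℕ) :
    ∃ ε > 0, ∀ x ∈ S, ∀ r, 0 < r → r ≤ R → ∀ p : MvPolynomial σ ℝ, p.totalDegree ≤ k →
      ∀ z ∈ closedBall x (L * r),
        μ {y ∈ closedBall x r ∩ S | |eval y p| < ε * |eval z p|} ≤ μ (closedBall x r ∩ S) / 2 := by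
  rcases S.eq_empty_or_nonempty with rfl | ⟨x₀, hx₀⟩
  · exact ⟨1, one_pos, by simp⟩
  have hR₀ : 0 < R := one_pos.trans_le hR
  have hd₀ : 0 ≤ d := h.nonneg hc₁ hc₂ hx₀
  obtain ⟨η, hη, hηc⟩ : ∃ η : NNReal, 0 < η ∧
      η * (c₂ * ENNReal.ofReal 2 ^ d) < c₁ * ENNReal.ofReal R⁻¹ ^ d / 2 :=
    ENNReal.exists_nnreal_pos_mul_lt (by finiteness) (by simp [hc₁, hR₀])
  obtain ⟨ε, hε, hsublevel⟩ := exists_forall_measure_polynomial_sublevel_le hd hd₀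
    (show 0 < 1 / 2 / R by positivity) L k (ENNReal.coe_ne_zero.2 hη.ne')
  refine ⟨ε, hε, fun x hx r hr hrR p hp z hz ↦ ?_⟩
  have hgrowth := (h.hasBallGrowth_restrict hd₀).mono (ρ₁ := 1 / 2 / R * r)
    (by rw [div_mul_eq_mul_div, div_le_iff₀ hR₀]; gcongr)
  calc μ {y ∈ closedBall x r ∩ S | |eval y p| < ε * |eval z p|}
      = μ.restrict S {y ∈ closedBall x r ∩ S | |eval y p| < ε * |eval z p|} :=
        (Measure.restrict_eq_self _ fun y hy ↦ hy.1.2).symm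
    _ ≤ μ.restrict S {y ∈ closedBall x (L * r) | |eval y p| < ε * |eval z p|} :=
        measure_mono fun y hy ↦
          ⟨closedBall_subset_closedBall (le_mul_of_one_le_left hr.le hL) hy.1.1, hy.2⟩
    _ ≤ c₂ * ENNReal.ofReal 2 ^ d * ENNReal.ofReal r ^ d * η :=
        hsublevel _ _ x r hr hgrowth p hp z hz
    _ = η * (c₂ * ENNReal.ofReal 2 ^ d) * ENNReal.ofReal r ^ d := by ring
    _ ≤ c₁ * ENNReal.ofReal R⁻¹ ^ d / 2 * ENNReal.ofReal r ^ d := by gcongr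
    _ = c₁ * ENNReal.ofReal (r / R) ^ d / 2 := by
        rw [div_eq_mul_inv r, ENNReal.ofReal_mul hr.le, ENNReal.mul_rpow_of_nonneg _ _ hd₀]
        simp only [div_eq_mul_inv]
        ring
    _ ≤ μ (closedBall x r ∩ S) / 2 := by gcongr; exact h.le_measure_of_le hR hx hr hrR

theorem exists_forall_enorm_eval_le_eLpNorm_cond (h : AhlforsRegularOn μ S d c₁ c₂)
    (hc₁ : c₁ ≠ 0) (hc₂ : c₂ ≠ ∞) (hd : Fintype.card σ - 1 < d) (hR : 1 ≤ R) (hL : 1 ≤ L)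
    (k : ℕ) {u : ℝ≥0∞} (hu : u ≠ 0) :
    ∃ K : ℝ≥0∞, K ≠ ∞ ∧ ∀ x ∈ S, ∀ r, 0 < r → r ≤ R → ∀ p : MvPolynomial σ ℝ,
      p.totalDegree ≤ k → ∀ z ∈ closedBall x (L * r),
        ‖eval z p‖ₑ ≤ K * eLpNorm (fun y ↦ eval y p) u μ[|closedBall x r ∩ S] := by
  obtain ⟨ε, hε, hsmall⟩ :=
    h.exists_forall_measure_polynomial_sublevel_le_half hc₁ hc₂ hd hR hL k
  have hpos : ENNReal.ofReal ε * 2⁻¹ ^ (1 / u.toReal) ≠ 0 := by simp [hε]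
  refine ⟨(ENNReal.ofReal ε * 2⁻¹ ^ (1 / u.toReal))⁻¹, ENNReal.inv_ne_top.2 hpos,
    fun x hx r hr hrR p hp z hz ↦ ?_⟩
  rw [← ENNReal.div_eq_inv_mul, ENNReal.le_div_iff_mul_le (.inl hpos) (.inl (by finiteness)),
    ← mul_assoc, mul_comm ‖_‖ₑ]
  refine mul_inv_two_rpow_le_eLpNorm_cond (h.measure_ne_zero hc₁ hx hr) (h.measure_ne_top hc₂)
    p.continuous_eval.stronglyMeasurable hu ?_
  convert hsmall x hx r hr hrR p hp z hz using 5 with y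
  rw [Real.enorm_eq_ofReal_abs, Real.enorm_eq_ofReal_abs, ← ENNReal.ofReal_mul hε.le,
    ENNReal.ofReal_lt_ofReal_iff_of_nonneg (abs_nonneg _)]

end AhlforsRegularOn

theorem stmt_12_general (n : ℕ) (d : ℝ) (hd : (n : ℝ) - 1 < d) (μ : Measure (Fin n → ℝ))
    (S : Set (Fin n → ℝ)) (c₁ c₂ : ℝ≥0∞) (hc₁ : c₁ ≠ 0) (hc₂ : c₂ ≠ ∞)
    (hreg : AhlforsRegularOn μ S d c₁ c₂) (R : ℝ) (hR : 0 < R) (k : ℕ) (u : ℝ≥0∞) (hu : u ≠ 0) :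
    ∃ C : ℝ≥0∞, C ≠ ∞ ∧
      ∀ (xQ xQ' : Fin n → ℝ) (rQ rQ' : ℝ), xQ' ∈ S →
        closedBall xQ' rQ' ⊆ closedBall xQ rQ →
        0 < rQ → rQ ≤ R * rQ' → R * rQ' ≤ R ^ 2 →
        ∀ P ∈ degLE n k, ∀ z ∈ closedBall xQ rQ,
          ‖P z‖ₑ ≤ C * eLpNorm P u μ[|closedBall xQ' rQ' ∩ S] := by
  obtain ⟨C, hC, hremez⟩ := hreg.exists_forall_enorm_eval_le_eLpNorm_cond hc₁ hc₂
    (by rwa [Fintype.card_fin]) (le_max_right R 1)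
    (show 1 ≤ 2 * max R 1 by linarith [le_max_right R 1]) k hu
  refine ⟨C, hC, fun xQ xQ' rQ rQ' hxQ' hsub hrQ hrQR hrQ'R P ⟨p, hp, hPp⟩ z hz ↦ ?_⟩
  have hrQ' : 0 < rQ' := pos_of_mul_pos_right (hrQ.trans_le hrQR) hR.le
  have hrQ'R : rQ' ≤ R := le_of_mul_le_mul_left (by rwa [← sq]) hR
  have hrecenter : z ∈ closedBall xQ' (2 * max R 1 * rQ') := by
    have hx : xQ' ∈ closedBall xQ rQ := hsub (mem_closedBall_self hrQ'.le)
    calc dist z xQ' ≤ rQ + rQ := (dist_triangle_right z xQ' xQ).trans (add_le_add hz hx)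
      _ ≤ 2 * (R * rQ') := by linarith
      _ ≤ 2 * max R 1 * rQ' := by rw [mul_assoc]; gcongr; exact le_max_left R 1
  rw [funext hPp]
  exact hremez xQ' hxQ' rQ' hrQ' (hrQ'R.trans (le_max_left R 1)) p hp z hrecenter

/-- Remez-type comparison for a `d`-set `S` with `n - 1 < d ≤ n`: if `Q' ⊆ Q` are cubes with
`x_{Q'} ∈ S` and `0 < r_Q ≤ R r_{Q'} ≤ R²`, then for every polynomial `p` of degree `≤ k` and
all `1 ≤ u, r ≤ ∞`, the normalized `L^r` mean of `p` over `Q` (Lebesgue measure) is bounded by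
`C` times the normalized `L^u` mean of `p` over `Q' ∩ S` (Hausdorff measure `H^d`). -/
theorem stmt_12 (n : ℕ) (d : ℝ) (hd1 : (n : ℝ) - 1 < d) (hdn : d ≤ n)
    (S : Set (Fin n → ℝ)) (hScl : IsClosed S)
    (c₁ c₂ : ℝ≥0∞) (hc₁ : 0 < c₁) (hc₂ : c₂ ≠ ∞)
    (hreg : ∀ w ∈ S, ∀ r : ℝ, 0 < r → r ≤ 1 →
      c₁ * ENNReal.ofReal r ^ d ≤ μH[d] (closedBall w r ∩ S) ∧
        μH[d] (closedBall w r ∩ S) ≤ c₂ * ENNReal.ofReal r ^ d)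
    (R : ℝ) (hR : 0 < R) (k : ℕ) (u r : ℝ≥0∞) (hu : 1 ≤ u) (hr : 1 ≤ r) :
    ∃ C : ℝ≥0∞, C ≠ ∞ ∧
      ∀ (xQ xQ' : Fin n → ℝ) (rQ rQ' : ℝ), xQ' ∈ S →
        closedBall xQ' rQ' ⊆ closedBall xQ rQ →
        0 < rQ → rQ ≤ R * rQ' → R * rQ' ≤ R ^ 2 →
        ∀ P ∈ degLE n k,
          eLpNorm P r ((volume (closedBall xQ rQ))⁻¹ • volume.restrict (closedBall xQ rQ))
            ≤ C * eLpNorm P u ((μH[d] (closedBall xQ' rQ' ∩ S))⁻¹ •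
                μH[d].restrict (closedBall xQ' rQ' ∩ S)) := by
  -- `μ[|T]` unfolds to `(μ T)⁻¹ • μ.restrict T`, the measure of the normalized means.
  obtain ⟨C, hC, hremez⟩ := stmt_12_general n d hd1 μH[d] S c₁ c₂ hc₁.ne' hc₂
    ⟨fun w hw r h₀ h₁ ↦ (hreg w hw r h₀ h₁).1, fun w hw r h₀ h₁ ↦ (hreg w hw r h₀ h₁).2⟩
    R hR k u (one_pos.trans_le hu).ne'
  exact ⟨C, hC, fun xQ xQ' rQ rQ' hx hsub h₀ hR₁ hR₂ P hP ↦ eLpNorm_cond_le_of_forall_mem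
    measurableSet_closedBall (hremez xQ xQ' rQ rQ' hx hsub h₀ hR₁ hR₂ P hP)⟩
end
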